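/- (Cartan cocycles give homotopy moment maps) Let μ : 𝔤 → Ω^{n−1} be linear and equivariant with d(μ(x)) = −ι_{v_x}ω and ι_{v_x}(μ(x)) = 0 for all x ∈ 𝔤 (so that ω − μ is a cocycle in the Cartan model). Then the maps f_k : 𝔤^k → Ω^{n−k} defined by f_k(x_1,…,x_k) := ς(k)·ι(v_{x_1}∧⋯∧v_{x_{k−1}})(μ(x_k)) (k = 1,…,n) form a homotopy moment map for ω; equivalently, the maps φ_k := μ_k satisfy d(φ_1(x)) = −ι_{v_x}ω for all x ∈ 𝔤, d_𝔤φ_{k−1} + (−1)^k·dφ_k = (−1)^{k−1}·ω_k for all 2 ≤ k ≤ n, and d_𝔤φ_n = (−1)^n·ω_{n+1}. -/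

import Mathlib

/-- Cartan calculus data over ℝ: a module `carrier` with graded pieces `deg i`
(`deg i = ⊥` for `i < 0`), a degree-`+1` differential `d` squaring to zero,
a real Lie algebra `X`, contractions `ι v` of degree `-1` depending linearly on `v`,
pairwise anticommuting, and satisfying the Cartan relation
`𝓛_v ∘ ι_w - ι_w ∘ 𝓛_v = ι_[v,w]` where `𝓛_v = d ∘ ι_v + ι_v ∘ d`. -/
structure CartanCalculus where
  carrier : Type
  [addCommGroup : AddCommGroup carrier]
  [module : Module ℝ carrier]
  deg : ℤ → Submodule ℝ carrier
  deg_neg : ∀ i : ℤ, i < 0 → deg i = ⊥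
  d : carrier →ₗ[ℝ] carrier
  d_deg : ∀ i : ℤ, ∀ a ∈ deg i, d a ∈ deg (i + 1)
  d_d : ∀ a : carrier, d (d a) = 0
  X : Type
  [lieRingX : LieRing X]
  [lieAlgebraX : LieAlgebra ℝ X]
  ι : X →ₗ[ℝ] carrier →ₗ[ℝ] carrier
  ι_deg : ∀ (v : X) (i : ℤ), ∀ a ∈ deg i, ι v a ∈ deg (i - 1)
  ι_ι : ∀ (v w : X) (a : carrier), ι v (ι w a) = - ι w (ι v a)
  cartan : ∀ (v w : X) (a : carrier),
      (d (ι v (ι w a)) + ι v (d (ι w a))) - ι w (d (ι v a) + ι v (d a)) = ι ⁅v, w⁆ a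

attribute [instance] CartanCalculus.addCommGroup CartanCalculus.module
  CartanCalculus.lieRingX CartanCalculus.lieAlgebraX

namespace CartanCalculus

/-- The Lie derivative `𝓛_v = d ∘ ι_v + ι_v ∘ d`. -/
def L (C : CartanCalculus) (v : C.X) : C.carrier →ₗ[ℝ] C.carrier :=
  C.d ∘ₗ C.ι v + C.ι v ∘ₗ C.d

/-- Iterated contraction: `iotaL [v₁, …, v_k] = ι_{v_k} ∘ ⋯ ∘ ι_{v₁}`, i.e. the
contraction `ι(v₁ ∧ ⋯ ∧ v_k)` (`ι_{v₁}` acts first). -/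
def iotaL (C : CartanCalculus) : List C.X → C.carrier →ₗ[ℝ] C.carrier
  | [] => LinearMap.id
  | v :: vs => (C.iotaL vs).comp (C.ι v)

end CartanCalculus

/-- Interpret a list as a `Fin k`-tuple (junk value `0` out of range). -/
def listToFun {α : Type} [Zero α] (k : ℕ) (l : List α) : Fin k → α :=
  fun m => l.getD m.val 0

/-- A map `𝔤^k → W` is multilinear. -/
def IsMultilinear {𝔤 : Type} [AddCommGroup 𝔤] [Module ℝ 𝔤] {W : Type}
    [AddCommGroup W] [Module ℝ W] {k : ℕ} (ψ : (Fin k → 𝔤) → W) : Prop :=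
  ∀ (x : Fin k → 𝔤) (i : Fin k),
    (∀ a b : 𝔤, ψ (Function.update x i (a + b))
        = ψ (Function.update x i a) + ψ (Function.update x i b)) ∧
    (∀ (c : ℝ) (a : 𝔤), ψ (Function.update x i (c • a)) = c • ψ (Function.update x i a))

/-- A map `𝔤^k → W` is alternating. -/
def IsAlternating {𝔤 : Type} {W : Type} [AddCommGroup W] {k : ℕ}
    (ψ : (Fin k → 𝔤) → W) : Prop :=
  ∀ (x : Fin k → 𝔤) (i j : Fin k), i ≠ j → x i = x j → ψ x = 0

/-- The Chevalley–Eilenberg differential of a `k`-cochain `ψ`: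
`(d_𝔤 ψ)(x₁,…,x_{k+1}) = Σ_{i<j} (-1)^{i+j} ψ([x_i,x_j], x₁, …, x̂_i, …, x̂_j, …, x_{k+1})`
(signs written for 1-based indices, as in the paper). -/
def dCE {𝔤 : Type} [LieRing 𝔤] [LieAlgebra ℝ 𝔤] {W : Type} [AddCommGroup W]
    [Module ℝ W] (k : ℕ) (ψ : (Fin k → 𝔤) → W) : (Fin (k + 1) → 𝔤) → W :=
  fun x => ∑ i : Fin (k + 1), ∑ j : Fin (k + 1),
    if (i : ℕ) < (j : ℕ) then
      ((-1 : ℝ) ^ ((i : ℕ) + (j : ℕ))) •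
        ψ (listToFun k (⁅x i, x j⁆ :: (((List.ofFn x).eraseIdx (j : ℕ)).eraseIdx (i : ℕ))))
    else 0

namespace CartanCalculus

/-- `σ_k(x₁,…,x_k) = ι(v_{x₁} ∧ ⋯ ∧ v_{x_k}) σ` where `v_x = ρ x`. -/
def lower (C : CartanCalculus) {𝔤 : Type} [LieRing 𝔤] [LieAlgebra ℝ 𝔤]
    (ρ : 𝔤 →ₗ⁅ℝ⁆ C.X) (k : ℕ) (σ : C.carrier) : (Fin k → 𝔤) → C.carrier :=
  fun x => C.iotaL (List.ofFn (fun i => ρ (x i))) σ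

/-- `F_k(x₁,…,x_k) = ι(v_{x₁} ∧ ⋯ ∧ v_{x_{k-1}}) (F x_k)`, with `F₀ := 0`. -/
def lowerF (C : CartanCalculus) {𝔤 : Type} [LieRing 𝔤] [LieAlgebra ℝ 𝔤]
    (ρ : 𝔤 →ₗ⁅ℝ⁆ C.X) (F : 𝔤 → C.carrier) : (k : ℕ) → (Fin k → 𝔤) → C.carrier
  | 0 => fun _ => 0
  | (k + 1) => fun x =>
      C.iotaL (List.ofFn (fun i : Fin k => ρ (x i.castSucc))) (F (x (Fin.last k)))

end CartanCalculus

/-- `ς(k) = -(-1)^{k(k+1)/2}`. -/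
def varsigma (k : ℕ) : ℝ := -((-1 : ℝ) ^ (k * (k + 1) / 2))

/-- A homotopy moment map for the invariant closed form `ω ∈ Ω^{n+1}`
(componentwise form of Def. 5.1 in [FRZ]): a family of alternating multilinear maps
`f_k : 𝔤^k → Ω^{n-k}` (`k = 1, …, n`) satisfying the moment map equations. -/
def IsMomentMap (C : CartanCalculus) {𝔤 : Type} [LieRing 𝔤] [LieAlgebra ℝ 𝔤]
    (ρ : 𝔤 →ₗ⁅ℝ⁆ C.X) (n : ℕ) (ω : C.carrier)
    (f : (k : ℕ) → (Fin k → 𝔤) → C.carrier) : Prop :=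
  (∀ k : ℕ, 1 ≤ k → k ≤ n →
      IsMultilinear (f k) ∧ IsAlternating (f k) ∧ ∀ x, f k x ∈ C.deg ((n : ℤ) - (k : ℤ))) ∧
  (∀ x : 𝔤, C.d (f 1 (fun _ => x)) = - C.ι (ρ x) ω) ∧
  (∀ k : ℕ, 2 ≤ k → k ≤ n → ∀ x : Fin k → 𝔤,
      (∑ i : Fin k, ∑ j : Fin k,
        if (i : ℕ) < (j : ℕ) then
          ((-1 : ℝ) ^ ((i : ℕ) + (j : ℕ) + 1)) •
            f (k - 1) (listToFun (k - 1)
              (⁅x i, x j⁆ :: (((List.ofFn x).eraseIdx (j : ℕ)).eraseIdx (i : ℕ))))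
        else 0)
      = C.d (f k x) + varsigma k • C.lower ρ k ω x) ∧
  (∀ x : Fin (n + 1) → 𝔤,
      (∑ i : Fin (n + 1), ∑ j : Fin (n + 1),
        if (i : ℕ) < (j : ℕ) then
          ((-1 : ℝ) ^ ((i : ℕ) + (j : ℕ) + 1)) •
            f n (listToFun n
              (⁅x i, x j⁆ :: (((List.ofFn x).eraseIdx (j : ℕ)).eraseIdx (i : ℕ))))
        else 0)
      = varsigma (n + 1) • C.lower ρ (n + 1) ω x)

/-!
Contracting Cartan's formula repeatedly expresses `± d (ι(v_{x₁} ∧ ⋯ ∧ v_{x_k}) σ)` as the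
contraction of `d σ`, a signed sum of contractions of the `𝓛_{v_{x_j}} σ`, and the
Chevalley–Eilenberg sum of the contractions of `σ` by the brackets `[x_i, x_j]`. Polarizing
`ι_{v_x} (μ x) = 0` gives `ι_{v_x} (μ y) = -ι_{v_y} (μ x)`, so `μ_k` may be rewritten with `μ`
evaluated at its first argument. Taking `σ = μ x₁` in the formula, `d σ` is a contraction of `ω`,
equivariance turns the Lie derivatives into the terms of `d_𝔤 μ_k` whose bracket involves `x₁`,
and the bracket sum supplies the remaining terms. In top degree `μ_{n+1}` vanishes because it has
degree `-1`.
-/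

section SignedSums

variable {α 𝔤 W : Type} [LieRing 𝔤] [AddCommGroup W] [Module ℝ W] {k : ℕ}

/-- The alternating sum `Σ_j (-1)^j H(x_j; x₀, …, x̂_j, …, x_{k-1})` over one omitted entry. The
remaining entries are passed as a list, as in `dCE`. -/
def eraseSum (H : α → List α → W) (x : Fin k → α) : W :=
  ∑ j : Fin k, (-1 : ℝ) ^ (j : ℕ) • H (x j) ((List.ofFn x).eraseIdx j)

/-- The alternating sum `Σ_{i<j} (-1)^{i+j} G([x_i, x_j]; x₀, …, x̂_i, …, x̂_j, …, x_{k-1})` of the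
Chevalley–Eilenberg differential. Unlike in `dCE`, the length `k` may be `0`, and the bracket and
the remaining entries are separate arguments, so that the sum obeys a recursion in `k`. -/
def bracketEraseSum (G : 𝔤 → List 𝔤 → W) (x : Fin k → 𝔤) : W :=
  ∑ i : Fin k, ∑ j : Fin k, if (i : ℕ) < (j : ℕ) then
    (-1 : ℝ) ^ ((i : ℕ) + (j : ℕ)) •
      G ⁅x i, x j⁆ (((List.ofFn x).eraseIdx j).eraseIdx i)
  else 0

theorem eraseSum_succ (H : α → List α → W) (x : Fin (k + 1) → α) :
    eraseSum H x =
      H (x 0) (List.ofFn (Fin.tail x)) - eraseSum (fun z l => H z (x 0 :: l)) (Fin.tail x) := by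
  simp [eraseSum, Fin.sum_univ_succ, List.ofFn_succ, Fin.tail_def, pow_succ, sub_eq_add_neg]

theorem eraseSum_sub (H K : α → List α → W) (x : Fin k → α) :
    eraseSum (fun z l => H z l - K z l) x = eraseSum H x - eraseSum K x := by
  simp only [eraseSum, smul_sub, Finset.sum_sub_distrib]

theorem eraseSum_neg (H : α → List α → W) (x : Fin k → α) :
    eraseSum (fun z l => -H z l) x = -eraseSum H x := by
  simp only [eraseSum, smul_neg, Finset.sum_neg_distrib]

theorem bracketEraseSum_succ (G : 𝔤 → List 𝔤 → W) (x : Fin (k + 1) → 𝔤) :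
    bracketEraseSum G x =
      bracketEraseSum (fun w l => G w (x 0 :: l)) (Fin.tail x)
        - eraseSum (fun z l => G ⁅x 0, z⁆ l) (Fin.tail x) := by
  have sign_succ_add_succ (i j : ℕ) : (-1 : ℝ) ^ (i + 1 + (j + 1)) = (-1) ^ (i + j) := by ring
  simp [bracketEraseSum, eraseSum, Fin.sum_univ_succ, List.ofFn_succ, Fin.tail_def,
    sign_succ_add_succ, pow_succ, sub_eq_neg_add]

theorem bracketEraseSum_smul (c : ℝ) (G : 𝔤 → List 𝔤 → W) (x : Fin k → 𝔤) :
    bracketEraseSum (fun w l => c • G w l) x = c • bracketEraseSum G x := by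
  simp only [bracketEraseSum, Finset.smul_sum, smul_ite, smul_zero, smul_comm c]

theorem bracketEraseSum_neg (G : 𝔤 → List 𝔤 → W) (x : Fin k → 𝔤) :
    bracketEraseSum (fun w l => -G w l) x = -bracketEraseSum G x := by
  simpa only [neg_one_smul] using bracketEraseSum_smul (-1) G x

theorem dCE_eq_bracketEraseSum [LieAlgebra ℝ 𝔤] {ψ : (Fin k → 𝔤) → W} {G : 𝔤 → List 𝔤 → W}
    (hψ : ∀ w l, l.length + 1 = k → ψ (listToFun k (w :: l)) = G w l) (x : Fin (k + 1) → 𝔤) :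
    dCE k ψ x = bracketEraseSum G x := by
  refine Finset.sum_congr rfl fun i _ => Finset.sum_congr rfl fun j _ => ?_
  split_ifs with hij
  · rw [hψ]
    grind
  · rfl

theorem sum_bracket_smul_eq_neg_smul_dCE [LieAlgebra ℝ 𝔤] (c : ℝ) (ψ : (Fin k → 𝔤) → W)
    (x : Fin (k + 1) → 𝔤) :
    (∑ i : Fin (k + 1), ∑ j : Fin (k + 1),
      if (i : ℕ) < (j : ℕ) then
        (-1 : ℝ) ^ ((i : ℕ) + (j : ℕ) + 1) •
          c • ψ (listToFun k (⁅x i, x j⁆ :: (((List.ofFn x).eraseIdx j).eraseIdx i)))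
      else 0) = -c • dCE k ψ x := by
  simp only [dCE, Finset.smul_sum, smul_ite, smul_zero, smul_smul]
  ring_nf

end SignedSums

theorem tail_listToFun_cons {α : Type} [Zero α] {k : ℕ} (a : α) (l : List α) :
    Fin.tail (listToFun (k + 1) (a :: l)) = listToFun k l := by
  funext i
  simp [Fin.tail, listToFun]

theorem ofFn_listToFun {α : Type} [Zero α] {k : ℕ} {l : List α} (hl : l.length = k) :
    List.ofFn (listToFun k l) = l := by
  subst hl
  exact List.ext_getElem (by simp) fun i _ hi => by simp [listToFun, hi]

section Cochains

variable {𝔤 W : Type} [AddCommGroup W] [Module ℝ W] {k : ℕ} {ψ : (Fin k → 𝔤) → W}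

theorem IsMultilinear.const_smul [AddCommGroup 𝔤] [Module ℝ 𝔤] (hψ : IsMultilinear ψ) (c : ℝ) :
    IsMultilinear fun x => c • ψ x := fun x i =>
  ⟨fun a b => by simp only [(hψ x i).1, smul_add],
    fun r a => by simp only [(hψ x i).2, smul_comm c]⟩

theorem IsAlternating.const_smul (hψ : IsAlternating ψ) (c : ℝ) :
    IsAlternating fun x => c • ψ x := fun x i j hij hx => by
  simp only [hψ x i j hij hx, smul_zero]

end Cochains

namespace CartanCalculus

variable (C : CartanCalculus)

theorem d_ι (v : C.X) (a : C.carrier) : C.d (C.ι v a) = C.L v a - C.ι v (C.d a) := by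
  simp [L]

theorem L_ι (v w : C.X) (a : C.carrier) :
    C.L v (C.ι w a) = C.ι w (C.L v a) - C.ι ⁅w, v⁆ a := by
  rw [← lie_skew w v, map_neg, LinearMap.neg_apply, ← C.cartan v w a]
  simp [L]

theorem ι_self (v : C.X) (a : C.carrier) : C.ι v (C.ι v a) = 0 := by
  have : IsAddTorsionFree C.carrier := .of_isTorsionFree ℝ C.carrier
  exact self_eq_neg.mp (C.ι_ι v v a)

theorem iotaL_cons (v : C.X) (l : List C.X) (a : C.carrier) :
    C.iotaL (v :: l) a = C.iotaL l (C.ι v a) := rfl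

theorem iotaL_mem_deg (l : List C.X) {p : ℤ} {a : C.carrier} (ha : a ∈ C.deg p) :
    C.iotaL l a ∈ C.deg (p - l.length) := by
  induction l generalizing p a with
  | nil => simpa [iotaL] using ha
  | cons v l ih =>
    rw [iotaL_cons, List.length_cons, Nat.cast_succ, add_comm, ← sub_sub]
    exact ih (C.ι_deg v p a ha)

theorem ι_iotaL (v : C.X) (l : List C.X) (a : C.carrier) :
    C.ι v (C.iotaL l a) = (-1 : ℝ) ^ l.length • C.iotaL l (C.ι v a) := by
  induction l generalizing a with
  | nil => simp [iotaL]
  | cons w l ih =>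
    rw [iotaL_cons, ih, iotaL_cons, C.ι_ι v w, map_neg]
    simp [pow_succ]

theorem iotaL_append_singleton (l : List C.X) (v : C.X) (a : C.carrier) :
    C.iotaL (l ++ [v]) a = C.ι v (C.iotaL l a) := by
  induction l generalizing a with
  | nil => rfl
  | cons _ _ ih => exact ih _

theorem iotaL_eq_zero_of_mem {l : List C.X} {v : C.X} (hv : v ∈ l) {a : C.carrier}
    (ha : C.ι v a = 0) : C.iotaL l a = 0 := by
  induction l generalizing a with
  | nil => simp at hv
  | cons w l ih =>
    rw [iotaL_cons]
    rcases List.mem_cons.mp hv with rfl | hvl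
    · rw [ha, map_zero]
    · exact ih hvl (by rw [C.ι_ι, ha, map_zero, neg_zero])

theorem iotaL_eq_zero_of_not_nodup {l : List C.X} (hl : ¬ l.Nodup) (a : C.carrier) :
    C.iotaL l a = 0 := by
  induction l generalizing a with
  | nil => simp at hl
  | cons v l ih =>
    rw [iotaL_cons]
    by_cases hv : v ∈ l
    · exact C.iotaL_eq_zero_of_mem hv (C.ι_self v a)
    · exact ih (fun hnodup => hl (List.nodup_cons.mpr ⟨hv, hnodup⟩)) _

variable {𝔤 : Type} [LieRing 𝔤] [LieAlgebra ℝ 𝔤] (ρ : 𝔤 →ₗ⁅ℝ⁆ C.X) {k : ℕ}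

section Lower

variable (σ : C.carrier)

theorem lower_eq_iotaL_map (x : Fin k → 𝔤) :
    C.lower ρ k σ x = C.iotaL ((List.ofFn x).map ρ) σ := by
  rw [List.map_ofFn]
  rfl

theorem lower_succ (x : Fin (k + 1) → 𝔤) :
    C.lower ρ (k + 1) σ x = C.lower ρ k (C.ι (ρ (x 0)) σ) (Fin.tail x) := by
  rw [lower, List.ofFn_succ, iotaL_cons]
  rfl

theorem lower_succ_last (x : Fin (k + 1) → 𝔤) :
    C.lower ρ (k + 1) σ x = C.ι (ρ (x (Fin.last k))) (C.lower ρ k σ (Fin.init x)) := by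
  rw [lower, List.ofFn_succ', List.concat_eq_append, iotaL_append_singleton]
  rfl

theorem ι_lower (v : C.X) (x : Fin k → 𝔤) :
    C.ι v (C.lower ρ k σ x) = (-1 : ℝ) ^ k • C.lower ρ k (C.ι v σ) x := by
  rw [lower, ι_iotaL, List.length_ofFn, lower]

theorem lower_neg (x : Fin k → 𝔤) : C.lower ρ k (-σ) x = -C.lower ρ k σ x :=
  map_neg _ _

theorem isMultilinear_lower : IsMultilinear (C.lower ρ k σ) := by
  induction k generalizing σ with
  | zero => exact fun _ i => i.elim0
  | succ k ih =>
    intro x i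
    cases i using Fin.cases with
    | zero => simp [lower, List.ofFn_succ, iotaL_cons]
    | succ i =>
      simpa [lower_succ, Fin.tail_update_succ, (Fin.succ_ne_zero i).symm] using
        ih (C.ι (ρ (x 0)) σ) (Fin.tail x) i

theorem isAlternating_lower : IsAlternating (C.lower ρ k σ) := fun _ _ _ hij hx =>
  C.iotaL_eq_zero_of_not_nodup
    (fun hnodup => hij (List.nodup_ofFn.mp hnodup (congrArg ρ hx))) σ

theorem d_lower (x : Fin k → 𝔤) :
    (-1 : ℝ) ^ k • C.d (C.lower ρ k σ x) =
      C.lower ρ k (C.d σ) x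
        - eraseSum (fun z l => C.iotaL (l.map ρ) (C.L (ρ z) σ)) x
        + bracketEraseSum (fun w l => C.iotaL (l.map ρ) (C.ι (ρ w) σ)) x := by
  induction k generalizing σ with
  | zero => simp [lower, iotaL, eraseSum, bracketEraseSum]
  | succ k ih =>
    rw [eraseSum_succ, bracketEraseSum_succ, lower_succ, lower_succ, ← lower_eq_iotaL_map]
    have lie_terms :
        eraseSum (fun z l => C.iotaL (l.map ρ) (C.L (ρ z) (C.ι (ρ (x 0)) σ))) (Fin.tail x) =
          eraseSum (fun z l => C.iotaL ((x 0 :: l).map ρ) (C.L (ρ z) σ)) (Fin.tail x)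
            - eraseSum (fun z l => C.iotaL (l.map ρ) (C.ι (ρ ⁅x 0, z⁆) σ)) (Fin.tail x) := by
      simp only [L_ι, map_sub, eraseSum_sub, LieHom.map_lie, List.map_cons, iotaL_cons]
    have bracket_terms :
        bracketEraseSum (fun w l => C.iotaL (l.map ρ) (C.ι (ρ w) (C.ι (ρ (x 0)) σ)))
            (Fin.tail x) =
          -bracketEraseSum (fun w l => C.iotaL ((x 0 :: l).map ρ) (C.ι (ρ w) σ))
            (Fin.tail x) := by
      simp only [C.ι_ι _ (ρ (x 0)), map_neg, bracketEraseSum_neg, List.map_cons, iotaL_cons]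
    have d_term :
        C.lower ρ k (C.d (C.ι (ρ (x 0)) σ)) (Fin.tail x) =
          C.lower ρ k (C.L (ρ (x 0)) σ) (Fin.tail x)
            - C.lower ρ k (C.ι (ρ (x 0)) (C.d σ)) (Fin.tail x) := by
      rw [d_ι]
      exact map_sub _ _ _
    rw [pow_succ, mul_neg_one, neg_smul, ih, lie_terms, bracket_terms, d_term]
    abel

end Lower

theorem lowerF_succ (F : 𝔤 → C.carrier) (x : Fin (k + 1) → 𝔤) :
    C.lowerF ρ F (k + 1) x = C.lower ρ k (F (x (Fin.last k))) (Fin.init x) := rfl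

theorem lowerF_mem_deg {F : 𝔤 → C.carrier} {p : ℤ} (hF : ∀ x, F x ∈ C.deg (p - 1))
    (x : Fin k → 𝔤) : C.lowerF ρ F k x ∈ C.deg (p - k) := by
  cases k with
  | zero => exact Submodule.zero_mem _
  | succ k =>
    have hdeg := C.iotaL_mem_deg (List.ofFn fun i : Fin k => ρ (x i.castSucc))
      (hF (x (Fin.last k)))
    rwa [List.length_ofFn, sub_sub, add_comm, ← Nat.cast_succ] at hdeg

theorem isAlternating_lowerF {F : 𝔤 → C.carrier} (hF : ∀ x, C.ι (ρ x) (F x) = 0) :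
    IsAlternating (C.lowerF ρ F k) := by
  cases k with
  | zero => exact fun _ i => i.elim0
  | succ k =>
    have eq_zero_of_eq_last (x : Fin (k + 1) → 𝔤) (i : Fin k)
        (hx : x i.castSucc = x (Fin.last k)) : C.lowerF ρ F (k + 1) x = 0 :=
      C.iotaL_eq_zero_of_mem (List.mem_ofFn.mpr ⟨i, rfl⟩) (by rw [hx, hF])
    intro x i j hij hx
    cases i using Fin.lastCases with
    | last =>
      cases j using Fin.lastCases with
      | last => exact absurd rfl hij
      | cast j => exact eq_zero_of_eq_last x j hx.symm
    | cast i =>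
      cases j using Fin.lastCases with
      | last => exact eq_zero_of_eq_last x i hx
      | cast j =>
        exact C.isAlternating_lower ρ _ (Fin.init x) i j (fun h => hij (h ▸ rfl)) hx

variable (μ : 𝔤 →ₗ[ℝ] C.carrier)

theorem isMultilinear_lowerF : IsMultilinear (C.lowerF ρ μ k) := by
  cases k with
  | zero => exact fun _ i => i.elim0
  | succ k =>
    intro x i
    cases i using Fin.lastCases with
    | last => simp [lowerF_succ, lower]
    | cast i =>
      simpa [lowerF_succ, Fin.init_update_castSucc, (Fin.castSucc_lt_last i).ne'] using
        C.isMultilinear_lower ρ (μ (x (Fin.last k))) (Fin.init x) i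

variable {μ}

theorem ι_apply_eq_neg_of_ι_self (hμvan : ∀ x : 𝔤, C.ι (ρ x) (μ x) = 0) (x y : 𝔤) :
    C.ι (ρ x) (μ y) = -C.ι (ρ y) (μ x) := by
  have hadd := hμvan (x + y)
  simp only [map_add, LinearMap.add_apply, hμvan, zero_add, add_zero] at hadd
  exact eq_neg_of_add_eq_zero_right hadd

theorem lowerF_succ_eq_lower_tail (hμvan : ∀ x : 𝔤, C.ι (ρ x) (μ x) = 0)
    (x : Fin (k + 1) → 𝔤) :
    C.lowerF ρ μ (k + 1) x = (-1 : ℝ) ^ k • C.lower ρ k (μ (x 0)) (Fin.tail x) := by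
  cases k with
  | zero => simp [lowerF, lower]
  | succ k =>
    have sign : (-1 : ℝ) ^ (k + 1) * (-1) ^ k = -1 := by
      rw [pow_succ', mul_assoc, ← mul_pow]
      simp
    calc C.lowerF ρ μ (k + 2) x
        = C.lower ρ k (C.ι (ρ (x 0)) (μ (x (Fin.last _)))) (Fin.tail (Fin.init x)) := by
          rw [lowerF_succ, lower_succ]
          rfl
      _ = -C.lower ρ k (C.ι (ρ (x (Fin.last _))) (μ (x 0))) (Fin.tail (Fin.init x)) := by
          rw [C.ι_apply_eq_neg_of_ι_self ρ hμvan, lower_neg]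
      _ = (-1 : ℝ) ^ (k + 1) •
            C.ι (ρ (x (Fin.last _))) (C.lower ρ k (μ (x 0)) (Fin.tail (Fin.init x))) := by
          rw [ι_lower, smul_smul, sign, neg_one_smul]
      _ = (-1 : ℝ) ^ (k + 1) • C.lower ρ (k + 1) (μ (x 0)) (Fin.tail x) := by
          rw [lower_succ_last, ← Fin.tail_init_eq_init_tail]
          rfl

theorem dCE_lowerF_succ (hμvan : ∀ x : 𝔤, C.ι (ρ x) (μ x) = 0) (x : Fin (k + 2) → 𝔤) :
    dCE (k + 1) (C.lowerF ρ μ (k + 1)) x =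
      (-1 : ℝ) ^ k • bracketEraseSum (fun w l => C.iotaL (l.map ρ) (μ w)) x := by
  rw [← bracketEraseSum_smul]
  refine dCE_eq_bracketEraseSum (fun w l hl => ?_) x
  rw [C.lowerF_succ_eq_lower_tail ρ hμvan, tail_listToFun_cons, lower_eq_iotaL_map,
    ofFn_listToFun (Nat.succ.inj hl)]
  rfl

theorem dCE_lowerF_add_d_lowerF {ω : C.carrier} (hμvan : ∀ x : 𝔤, C.ι (ρ x) (μ x) = 0)
    (hμequiv : ∀ x y : 𝔤, C.L (ρ x) (μ y) = μ ⁅x, y⁆)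
    (hμmom : ∀ x : 𝔤, C.d (μ x) = -C.ι (ρ x) ω) (x : Fin (k + 1) → 𝔤) :
    dCE k (C.lowerF ρ μ k) x + (-1 : ℝ) ^ (k + 1) • C.d (C.lowerF ρ μ (k + 1) x) =
      (-1 : ℝ) ^ k • C.lower ρ (k + 1) ω x := by
  cases k with
  | zero => simp [dCE, lowerF, lower, iotaL, hμmom]
  | succ k =>
    have lie_terms :
        eraseSum (fun z l => C.iotaL (l.map ρ) (C.L (ρ z) (μ (x 0)))) (Fin.tail x) =
          -eraseSum (fun z l => C.iotaL (l.map ρ) (μ ⁅x 0, z⁆)) (Fin.tail x) := by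
      simp only [hμequiv, ← lie_skew _ (x 0), map_neg, eraseSum_neg]
    have bracket_terms :
        bracketEraseSum (fun w l => C.iotaL (l.map ρ) (C.ι (ρ w) (μ (x 0)))) (Fin.tail x) =
          -bracketEraseSum (fun w l => C.iotaL ((x 0 :: l).map ρ) (μ w)) (Fin.tail x) := by
      simp only [C.ι_apply_eq_neg_of_ι_self ρ hμvan _ (x 0), map_neg, bracketEraseSum_neg,
        List.map_cons, iotaL_cons]
    have d_front : (-1 : ℝ) ^ (k + 1) • C.d (C.lower ρ (k + 1) (μ (x 0)) (Fin.tail x)) =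
        -C.lower ρ (k + 2) ω x
          - bracketEraseSum (fun w l => C.iotaL (l.map ρ) (μ w)) x := by
      rw [d_lower, lie_terms, bracket_terms, hμmom, lower_neg, ← lower_succ,
        bracketEraseSum_succ _ x]
      abel
    rw [C.dCE_lowerF_succ ρ hμvan, C.lowerF_succ_eq_lower_tail ρ hμvan, map_smul, d_front]
    module

end CartanCalculus

theorem varsigma_succ (k : ℕ) : varsigma (k + 1) = (-1 : ℝ) ^ (k + 1) * varsigma k := by
  have triangle : (k + 1) * (k + 1 + 1) / 2 = (k + 1) + k * (k + 1) / 2 := by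
    rw [← Nat.mul_add_div two_pos]
    ring_nf
  rw [varsigma, varsigma, triangle, pow_add, mul_neg]

section MomentMap

variable {C : CartanCalculus} {𝔤 : Type} [LieRing 𝔤] [LieAlgebra ℝ 𝔤] {ρ : 𝔤 →ₗ⁅ℝ⁆ C.X} {n : ℕ}
  {ω : C.carrier}

theorem IsMomentMap.of_dCE_eq {φ : (k : ℕ) → (Fin k → 𝔤) → C.carrier}
    (hφ : ∀ k : ℕ, 1 ≤ k → k ≤ n →
      IsMultilinear (φ k) ∧ IsAlternating (φ k) ∧ ∀ x, φ k x ∈ C.deg ((n : ℤ) - (k : ℤ)))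
    (hone : ∀ x : 𝔤, C.d (φ 1 fun _ => x) = -C.ι (ρ x) ω)
    (hsucc : ∀ k : ℕ, 1 ≤ k → k + 1 ≤ n → ∀ x : Fin (k + 1) → 𝔤,
      dCE k (φ k) x + (-1 : ℝ) ^ (k + 1) • C.d (φ (k + 1) x) =
        (-1 : ℝ) ^ k • C.lower ρ (k + 1) ω x)
    (htop : ∀ x : Fin (n + 1) → 𝔤, dCE n (φ n) x = (-1 : ℝ) ^ n • C.lower ρ (n + 1) ω x) :
    IsMomentMap C ρ n ω fun k x => varsigma k • φ k x := by
  refine ⟨fun k hk hkn => ?_, fun x => ?_, fun k hk hkn x => ?_, fun x => ?_⟩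
  · obtain ⟨hmulti, halt, hdeg⟩ := hφ k hk hkn
    exact ⟨hmulti.const_smul _, halt.const_smul _, fun x => Submodule.smul_mem _ _ (hdeg x)⟩
  · rw [map_smul, hone]
    simp [varsigma]
  · obtain ⟨k, rfl⟩ := Nat.exists_eq_add_of_le' (one_le_two.trans hk)
    refine (sum_bracket_smul_eq_neg_smul_dCE (varsigma k) (φ k) x).trans ?_
    rw [eq_sub_of_add_eq (hsucc k (by omega) hkn x), map_smul, varsigma_succ, pow_succ]
    module
  · refine (sum_bracket_smul_eq_neg_smul_dCE (varsigma n) (φ n) x).trans ?_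
    rw [htop, varsigma_succ, pow_succ]
    module

theorem cartan_cocycle_gives_momentMap_general (μ : 𝔤 →ₗ[ℝ] C.carrier)
    (hμdeg : ∀ x : 𝔤, μ x ∈ C.deg ((n : ℤ) - 1))
    (hμequiv : ∀ x y : 𝔤, C.L (ρ x) (μ y) = μ ⁅x, y⁆)
    (hμmom : ∀ x : 𝔤, C.d (μ x) = -C.ι (ρ x) ω)
    (hμvan : ∀ x : 𝔤, C.ι (ρ x) (μ x) = 0) :
    IsMomentMap C ρ n ω (fun k x => varsigma k • C.lowerF ρ μ k x) ∧
    (∀ x : 𝔤, C.d (C.lowerF ρ μ 1 fun _ => x) = -C.ι (ρ x) ω) ∧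
    (∀ k : ℕ, 1 ≤ k → k + 1 ≤ n → ∀ x : Fin (k + 1) → 𝔤,
      dCE k (C.lowerF ρ μ k) x + (-1 : ℝ) ^ (k + 1) • C.d (C.lowerF ρ μ (k + 1) x) =
        (-1 : ℝ) ^ k • C.lower ρ (k + 1) ω x) ∧
    (∀ x : Fin (n + 1) → 𝔤,
      dCE n (C.lowerF ρ μ n) x = (-1 : ℝ) ^ n • C.lower ρ (n + 1) ω x) := by
  have hsucc (k : ℕ) (x : Fin (k + 1) → 𝔤) :
      dCE k (C.lowerF ρ μ k) x + (-1 : ℝ) ^ (k + 1) • C.d (C.lowerF ρ μ (k + 1) x) =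
        (-1 : ℝ) ^ k • C.lower ρ (k + 1) ω x :=
    C.dCE_lowerF_add_d_lowerF ρ hμvan hμequiv hμmom x
  have htop (x : Fin (n + 1) → 𝔤) :
      dCE n (C.lowerF ρ μ n) x = (-1 : ℝ) ^ n • C.lower ρ (n + 1) ω x := by
    have hzero : C.lowerF ρ μ (n + 1) x = 0 := by
      simpa [C.deg_neg] using C.lowerF_mem_deg ρ hμdeg x
    simpa [hzero] using hsucc n x
  refine ⟨.of_dCE_eq (fun k _ _ => ?_) hμmom (fun k _ _ => hsucc k) htop, hμmom,
    fun k _ _ => hsucc k, htop⟩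
  exact ⟨C.isMultilinear_lowerF ρ μ, C.isAlternating_lowerF ρ hμvan, C.lowerF_mem_deg ρ hμdeg⟩

end MomentMap

/-- Cartan cocycles give homotopy moment maps,
Prop. 4.4 of the paper. If `μ : 𝔤 → Ω^{n-1}` is linear, equivariant, with
`d(μ x) = -ι_{v_x}ω` and `ι_{v_x}(μ x) = 0` (so `ω - μ` is a Cartan cocycle),
then `f_k(x₁,…,x_k) := ς(k)·ι(v_{x₁}∧⋯∧v_{x_{k-1}})(μ x_k)` is a homotopy
moment map for `ω`; equivalently `φ_k := μ_k` satisfies `d_tot φ = ω̃`. -/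
theorem cartan_cocycle_gives_momentMap (C : CartanCalculus) {𝔤 : Type} [LieRing 𝔤]
    [LieAlgebra ℝ 𝔤] (ρ : 𝔤 →ₗ⁅ℝ⁆ C.X) (n : ℕ) (hn : 1 ≤ n) (ω : C.carrier)
    (hω : ω ∈ C.deg ((n : ℤ) + 1)) (hcl : C.d ω = 0)
    (hinv : ∀ x : 𝔤, C.L (ρ x) ω = 0)
    (μ : 𝔤 →ₗ[ℝ] C.carrier) (hμdeg : ∀ x : 𝔤, μ x ∈ C.deg ((n : ℤ) - 1))
    (hμequiv : ∀ x y : 𝔤, C.L (ρ x) (μ y) = μ ⁅x, y⁆)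
    (hμmom : ∀ x : 𝔤, C.d (μ x) = - C.ι (ρ x) ω)
    (hμvan : ∀ x : 𝔤, C.ι (ρ x) (μ x) = 0) :
    IsMomentMap C ρ n ω (fun k x => varsigma k • C.lowerF ρ (fun y => μ y) k x) ∧
    ((∀ x : 𝔤, C.d (C.lowerF ρ (fun y => μ y) 1 (fun _ => x)) = - C.ι (ρ x) ω) ∧
     (∀ k : ℕ, 1 ≤ k → k + 1 ≤ n → ∀ x : Fin (k + 1) → 𝔤,
        dCE k (C.lowerF ρ (fun y => μ y) k) x
            + ((-1 : ℝ) ^ (k + 1)) • C.d (C.lowerF ρ (fun y => μ y) (k + 1) x)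
          = ((-1 : ℝ) ^ k) • C.lower ρ (k + 1) ω x) ∧
     (∀ x : Fin (n + 1) → 𝔤,
        dCE n (C.lowerF ρ (fun y => μ y) n) x
          = ((-1 : ℝ) ^ n) • C.lower ρ (n + 1) ω x)) := by
  exact cartan_cocycle_gives_momentMap_general μ hμdeg hμequiv hμmom hμvan
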